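/- arXiv:1006.1196 — 5 statements merged into one kernel-verified Lean document; each statement's English description precedes it below -/
import Mathlib

section
/- Let (x, y, z, w) be a primitive solution of x^4 + 2y^4 = z^4 + 4w^4. Then 5 divides y, and exactly one of the following two cases occurs: either 5 divides w, 5 does not divide x and 5 does not divide z; or 5 divides x, 5 does not divide z and 5 does not divide w. -/
/-!
By Fermat's little theorem, `t ^ 4` is congruent modulo `5` to `1` if `5 ∤ t` and to `0` otherwise.
Since `4 ≡ -1`, the equation gives `x ^ 4 + 2 * y ^ 4 + w ^ 4 ≡ z ^ 4`. With every fourth power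
replaced by `0` or `1`, both sides are natural numbers less than `5`, hence equal and at most `1`:
the coefficient `2` forces `5 ∣ y`, at most one of `x` and `w` is prime to `5`, and exactly one is
if `z` is. If `5 ∣ z` instead, `5` would divide all four numbers.
The same argument works modulo any prime `p`, with exponent `p - 1` and any coefficient `a` such
that `2 ≤ a` and `a + 2 < p` in place of `2`.
-/

theorem pow_card_sub_one_eq_ite {K : Type*} [GroupWithZero K] [Fintype K] [DecidableEq K] (t : K) :
    t ^ (Fintype.card K - 1) = if t = 0 then 0 else 1 := by
  split_ifs with ht
  · rw [ht, zero_pow (Nat.sub_ne_zero_of_lt Fintype.one_lt_card)]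
  · exact FiniteField.pow_card_sub_one_eq_one t ht

theorem zero_pattern_of_pow_add_mul_pow_add_pow_eq_pow {K : Type*} [Field K] [Fintype K] {p : ℕ}
    [CharP K p] {a : ℕ} (ha : 2 ≤ a) (hap : a + 2 < p) {x y z w : K}
    (h : x ^ (Fintype.card K - 1) + a * y ^ (Fintype.card K - 1) + w ^ (Fintype.card K - 1) =
      z ^ (Fintype.card K - 1)) :
    y = 0 ∧ (x = 0 ∨ w = 0) ∧ (z = 0 ↔ x = 0 ∧ w = 0) := by
  classical
  let ε (t : K) : ℕ := if t = 0 then 0 else 1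
  have cast_ε (t : K) : (ε t : K) = t ^ (Fintype.card K - 1) := by
    simp only [ε, pow_card_sub_one_eq_ite, Nat.cast_ite, Nat.cast_zero, Nat.cast_one]
  have ε_le_one (t : K) : ε t ≤ 1 := by unfold ε; split_ifs <;> decide
  have ε_eq_zero (t : K) : ε t = 0 ↔ t = 0 := by simp [ε]
  have lhs_lt : ε x + a * ε y + ε w < p :=
    calc
      ε x + a * ε y + ε w ≤ 1 + a * 1 + 1 := by gcongr <;> exact ε_le_one _
      _ < p := by omega
  have rhs_lt : ε z < p := (ε_le_one z).trans_lt (by omega)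
  have cast_eq : ((ε x + a * ε y + ε w : ℕ) : K) = (ε z : ℕ) := by
    simpa only [Nat.cast_add, Nat.cast_mul, cast_ε] using h
  have eq : ε x + a * ε y + ε w = ε z := CharP.natCast_injOn_Iio K p lhs_lt rhs_lt cast_eq
  have hz : ε z ≤ 1 := ε_le_one z
  have hy : ε y = 0 := by
    by_contra hy
    have : a ≤ a * ε y := Nat.le_mul_of_pos_right a (Nat.pos_of_ne_zero hy)
    omega
  rw [hy, mul_zero, add_zero] at eq
  simp only [← ε_eq_zero]
  omega

theorem stmt_2_general {p a : ℕ} (hp : p.Prime) (ha : 2 ≤ a) (hap : a + 2 < p) {x y z w : ℤ}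
    (h : x ^ (p - 1) + a * y ^ (p - 1) + w ^ (p - 1) ≡ z ^ (p - 1) [ZMOD p])
    (hgcd : ¬ p ∣ Int.gcd (Int.gcd (Int.gcd x y) z) w) :
    (p : ℤ) ∣ y ∧
      Xor ((p : ℤ) ∣ w ∧ ¬ (p : ℤ) ∣ x ∧ ¬ (p : ℤ) ∣ z)
        ((p : ℤ) ∣ x ∧ ¬ (p : ℤ) ∣ z ∧ ¬ (p : ℤ) ∣ w) := by
  have : Fact p.Prime := ⟨hp⟩
  have h_field : (x : ZMod p) ^ (p - 1) + a * (y : ZMod p) ^ (p - 1) + (w : ZMod p) ^ (p - 1) =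
      (z : ZMod p) ^ (p - 1) := by
    exact_mod_cast (ZMod.intCast_eq_intCast_iff _ _ p).2 h
  obtain ⟨hy, hxw, hz⟩ : (p : ℤ) ∣ y ∧ ((p : ℤ) ∣ x ∨ (p : ℤ) ∣ w) ∧
      ((p : ℤ) ∣ z ↔ (p : ℤ) ∣ x ∧ (p : ℤ) ∣ w) := by
    simp only [← ZMod.intCast_zmod_eq_zero_iff_dvd]
    exact zero_pattern_of_pow_add_mul_pow_add_pow_eq_pow ha hap (by rwa [ZMod.card p])
  have not_dvd_z : ¬ (p : ℤ) ∣ z := fun dvd_z ↦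
    have ⟨hx, hw⟩ := hz.1 dvd_z
    hgcd <| Int.dvd_gcd (Int.dvd_coe_gcd (Int.dvd_coe_gcd hx hy) dvd_z) hw
  exact ⟨hy, by unfold Xor; tauto⟩

/-- For a primitive solution `(x, y, z, w)` of `x^4 + 2y^4 = z^4 + 4w^4`, `5` divides `y` and
exactly one of the two cases occurs: either `5 ∣ w`, `5 ∤ x`, `5 ∤ z` (case N), or
`5 ∣ x`, `5 ∤ z`, `5 ∤ w` (case S). -/
theorem stmt_2 (x y z w : ℤ)
    (heq : x ^ 4 + 2 * y ^ 4 = z ^ 4 + 4 * w ^ 4)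
    (hprim : Int.gcd (Int.gcd (Int.gcd x y) z) w = 1) :
    (5 : ℤ) ∣ y ∧
      Xor' ((5 : ℤ) ∣ w ∧ ¬ (5 : ℤ) ∣ x ∧ ¬ (5 : ℤ) ∣ z)
        ((5 : ℤ) ∣ x ∧ ¬ (5 : ℤ) ∣ z ∧ ¬ (5 : ℤ) ∣ w) := by
  have h : x ^ 4 + 2 * y ^ 4 + w ^ 4 ≡ z ^ 4 [ZMOD 5] := Int.modEq_iff_dvd.2 ⟨-w ^ 4, by linarith⟩
  exact stmt_2_general Nat.prime_five le_rfl (by norm_num) h (by norm_num [hprim])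
end

section
/- Let (x, y, z, w) be a primitive solution of x^4 + 2y^4 = z^4 + 4w^4. Then x and z are odd while y and w are even. -/
/-!
If `n > 2` is even, then `a ^ n` modulo `8` depends only on the parity of `a`. Since `x` and `z`
have the same parity, `x ^ n + 2 * y ^ n = z ^ n + 4 * w ^ n` gives `y ^ n ≡ 2 * w ^ n` modulo `4`.
This makes `y` even, so `4 ∣ y ^ n`, and hence `w` is even too. Were `x` even, all four numbers
would be even.
-/

theorem pow_modEq_one_eight_of_odd {a : ℤ} {n : ℕ} (ha : Odd a) (hn : Even n) :
    a ^ n ≡ 1 [ZMOD 8] := by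
  obtain ⟨k, rfl⟩ := hn.two_dvd
  have hsq : a ^ 2 ≡ 1 [ZMOD 8] := (Int.modEq_iff_dvd.mpr (Int.eight_dvd_sq_sub_one_of_odd ha)).symm
  simpa only [pow_mul, one_pow] using hsq.pow k

theorem pow_modEq_pow_eight_of_even_iff {a b : ℤ} {n : ℕ} (h : Even a ↔ Even b)
    (hn : Even n) (hn2 : 2 < n) : a ^ n ≡ b ^ n [ZMOD 8] := by
  rcases Int.even_or_odd a with ha | ha
  · have ha8 : a ^ n ≡ 0 [ZMOD 8] := (pow_dvd_pow_of_dvd_of_le ha.two_dvd hn2).modEq_zero_int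
    have hb8 : b ^ n ≡ 0 [ZMOD 8] :=
      (pow_dvd_pow_of_dvd_of_le (h.mp ha).two_dvd hn2).modEq_zero_int
    exact ha8.trans hb8.symm
  · have hb : Odd b := by rwa [← Int.not_even_iff_odd, ← h, Int.not_even_iff_odd]
    exact (pow_modEq_one_eight_of_odd ha hn).trans (pow_modEq_one_eight_of_odd hb hn).symm

theorem even_and_even_of_pow_modEq_two_mul {a b : ℤ} {n : ℕ} (hn : 2 ≤ n)
    (h : a ^ n ≡ 2 * b [ZMOD 4]) : Even a ∧ Even b := by
  have hpow : Even (a ^ n) := by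
    rw [Int.even_iff]
    unfold Int.ModEq at h
    omega
  have ha : Even a := (Int.even_pow.mp hpow).1
  have hdvd : 4 ∣ 2 * b := h.dvd_iff.mp (pow_dvd_pow_of_dvd_of_le ha.two_dvd hn)
  have hb : 2 ∣ b := by omega
  exact ⟨ha, even_iff_two_dvd.mpr hb⟩

section

variable {x y z w : ℤ} {n : ℕ}

theorem even_iff_even_of_pow_add_eq (hn : n ≠ 0)
    (heq : x ^ n + 2 * y ^ n = z ^ n + 4 * w ^ n) : Even x ↔ Even z := by
  have hpow : Even (x ^ n) ↔ Even (z ^ n) := by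
    rw [Int.even_iff, Int.even_iff]
    omega
  simpa only [Int.even_pow' hn] using hpow

theorem even_and_even_of_pow_add_eq (hn : Even n) (hn2 : 2 < n)
    (heq : x ^ n + 2 * y ^ n = z ^ n + 4 * w ^ n) : Even y ∧ Even w := by
  have hxz : x ^ n ≡ z ^ n [ZMOD 8] :=
    pow_modEq_pow_eight_of_even_iff (even_iff_even_of_pow_add_eq (by omega) heq) hn hn2
  have hyw : y ^ n ≡ 2 * w ^ n [ZMOD 4] := by
    unfold Int.ModEq at hxz ⊢
    omega
  obtain ⟨hy, hw⟩ := even_and_even_of_pow_modEq_two_mul hn2.le hyw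
  exact ⟨hy, (Int.even_pow.mp hw).1⟩

theorem stmt_7_general (hn : Even n) (hn2 : 2 < n)
    (heq : x ^ n + 2 * y ^ n = z ^ n + 4 * w ^ n)
    (hgcd : Odd (Int.gcd (Int.gcd (Int.gcd x y) z) w)) :
    Odd x ∧ Odd z ∧ Even y ∧ Even w := by
  have hxz : Even x ↔ Even z := even_iff_even_of_pow_add_eq (by omega) heq
  obtain ⟨hy, hw⟩ := even_and_even_of_pow_add_eq hn hn2 heq
  have hx : ¬ Even x := fun hx ↦ by
    have hdvd : (2 : ℤ) ∣ Int.gcd (Int.gcd (Int.gcd x y) z) w :=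
      Int.dvd_coe_gcd (Int.dvd_coe_gcd (Int.dvd_coe_gcd hx.two_dvd hy.two_dvd)
        (hxz.mp hx).two_dvd) hw.two_dvd
    exact hgcd.not_two_dvd_nat (mod_cast hdvd)
  exact ⟨Int.not_even_iff_odd.mp hx, Int.not_even_iff_odd.mp (mt hxz.mpr hx), hy, hw⟩

end

/-- For a primitive solution `(x, y, z, w)` of `x^4 + 2y^4 = z^4 + 4w^4`,
`x` and `z` are odd while `y` and `w` are even. -/
theorem stmt_7 (x y z w : ℤ)
    (heq : x ^ 4 + 2 * y ^ 4 = z ^ 4 + 4 * w ^ 4)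
    (hprim : Int.gcd (Int.gcd (Int.gcd x y) z) w = 1) :
    Odd x ∧ Odd z ∧ Even y ∧ Even w :=
  stmt_7_general (by decide) (by norm_num) heq (hprim ▸ odd_one)
end

section
/- Let k ≥ 4 be an integer and r an integer. There exist an odd integer z and an even integer w with z^4 + 4w^4 ≡ r (mod 2^k) if and only if r ≡ 1 (mod 16). Likewise, there exist an odd integer x and an even integer y with x^4 + 2y^4 ≡ r (mod 2^k) if and only if r ≡ 1 (mod 16). -/
/-!
A root of `t ^ p ^ m ≡ r` modulo `p ^ (n + m)` that is prime to `p` can be refined by Hensel's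
method, although the derivative vanishes modulo `p`: multiplying `s` by `1 + p ^ n * x` multiplies
`s ^ p ^ m` by `1 + p ^ (n + m) * (x + p * y)` for some `y`, so `x` modulo `p` can be chosen to
gain one more power of `p`. For `p = 2` and `n = 2`, every `r ≡ 1 (mod 2 ^ (m + 2))` is therefore
congruent to the `2 ^ m`-th power of an odd integer modulo every power of `2`, and the second
variable may be taken to be `0`. Conversely, an odd square is `1` modulo `8`, and each further
squaring gains one factor `2`.
-/

section Lifting

variable {R : Type*} [CommRing R] {p m n : ℕ} {r s : R}

/-- For prime `p`, the condition `n + 2 ≤ n * p` fails only for `n = 0` and for `p = 2`, `n = 1`. -/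
lemma exists_pow_succ_dvd_sub_pow_prime_pow (hp : p.Prime) (hn : n + 2 ≤ n * p)
    (hs : IsCoprime s (p : R)) (h : (p : R) ^ (n + m) ∣ r - s ^ p ^ m) :
    ∃ t, (p : R) ^ n ∣ t - s ∧ (p : R) ^ (n + m + 1) ∣ r - t ^ p ^ m := by
  obtain ⟨d, hd⟩ := h
  obtain ⟨a, b, hab⟩ : IsCoprime (s ^ p ^ m) (p : R) := hs.pow_left
  have p_dvd : (p : R) ∣ (p : R) ^ n := dvd_pow_self _ (by rintro rfl; omega)
  have p_mul_dvd : (p : R) * p ^ n * p ∣ ((p : R) ^ n) ^ p := by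
    rw [← pow_succ', ← pow_succ, ← pow_mul]
    exact pow_dvd_pow _ hn
  obtain ⟨y, hy⟩ := ZMod.exists_one_add_mul_pow_prime_pow_eq hp p_dvd p_mul_dvd (a * d) m
  refine ⟨s * (1 + p ^ n * (a * d)), ⟨s * (a * d), by ring⟩, b * d - s ^ p ^ m * y, ?_⟩
  calc r - (s * (1 + p ^ n * (a * d))) ^ p ^ m
      = (r - s ^ p ^ m) - p ^ (n + m) * s ^ p ^ m * (a * d + p * y) := by
        rw [mul_pow, hy]
        ring
    _ = p ^ (n + m) * (d * (1 - a * s ^ p ^ m) - p * (s ^ p ^ m * y)) := by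
        rw [hd]
        ring
    _ = p ^ (n + m + 1) * (b * d - s ^ p ^ m * y) := by
        rw [← eq_sub_of_add_eq' hab]
        ring

theorem exists_pow_dvd_sub_pow_prime_pow (hp : p.Prime) (hn : n + 2 ≤ n * p)
    (hs : IsCoprime s (p : R)) (h : (p : R) ^ (n + m) ∣ r - s ^ p ^ m) (k : ℕ) :
    ∃ t, (p : R) ^ n ∣ t - s ∧ (p : R) ^ k ∣ r - t ^ p ^ m := by
  suffices lift : ∃ t, (p : R) ^ n ∣ t - s ∧ (p : R) ^ (n + k + m) ∣ r - t ^ p ^ m by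
    obtain ⟨t, hts, htr⟩ := lift
    exact ⟨t, hts, (pow_dvd_pow _ (by omega)).trans htr⟩
  induction k with
  | zero => exact ⟨s, by simp, h⟩
  | succ k ih =>
    obtain ⟨t, ⟨c, hc⟩, htr⟩ := ih
    have t_coprime : IsCoprime t (p : R) := by
      obtain ⟨q, hq⟩ : (p : R) ∣ p ^ n := dvd_pow_self _ (by rintro rfl; omega)
      rw [eq_add_of_sub_eq' hc, hq, mul_assoc]
      exact hs.add_mul_left_left _
    have hnk : n + k + 2 ≤ (n + k) * p := by nlinarith [hp.two_le]
    obtain ⟨t', htt', htr'⟩ := exists_pow_succ_dvd_sub_pow_prime_pow hp hnk t_coprime htr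
    refine ⟨t', ?_, by convert htr' using 2; ring⟩
    rw [← sub_add_sub_cancel t' t s]
    exact dvd_add ((pow_dvd_pow _ (n.le_add_right k)).trans htt') ⟨c, hc⟩

end Lifting

lemma odd_pow_two_pow_modEq_one {z : ℤ} (hz : Odd z) {m : ℕ} (hm : 1 ≤ m) :
    z ^ 2 ^ m ≡ 1 [ZMOD 2 ^ (m + 2)] := by
  obtain ⟨m, rfl⟩ := Nat.exists_eq_add_of_le' hm
  obtain ⟨x, hx⟩ := Int.eight_dvd_sq_sub_one_of_odd hz
  obtain ⟨y, hy⟩ := ZMod.exists_one_add_mul_pow_prime_pow_eq (u := (8 : ℤ)) (v := 2)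
    Nat.prime_two (by norm_num) (by norm_num) x m
  refine (Int.modEq_iff_dvd.mpr ⟨x + 2 * y, ?_⟩).symm
  rw [pow_succ', pow_mul, eq_add_of_sub_eq' hx, hy]
  push_cast
  ring

lemma exists_odd_pow_two_pow_modEq {m : ℕ} {r : ℤ} (hr : r ≡ 1 [ZMOD 2 ^ (m + 2)]) (k : ℕ) :
    ∃ z : ℤ, Odd z ∧ z ^ 2 ^ m ≡ r [ZMOD 2 ^ k] := by
  have one_root : ((2 : ℕ) : ℤ) ^ (2 + m) ∣ r - 1 ^ 2 ^ m := by
    simpa only [one_pow, Nat.cast_ofNat, add_comm] using hr.symm.dvd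
  obtain ⟨z, hz, hzr⟩ :=
    exists_pow_dvd_sub_pow_prime_pow Nat.prime_two le_rfl isCoprime_one_left one_root k
  have z_sub_one_even : Even (z - 1) :=
    even_iff_two_dvd.mpr ((dvd_pow_self 2 two_ne_zero).trans hz)
  exact ⟨z, by simpa using z_sub_one_even.add_one, Int.modEq_iff_dvd.mpr hzr⟩

theorem stmt_9_general {m e k : ℕ} (hm : 1 ≤ m) (he : m + 2 ≤ e) (hk : m + 2 ≤ k) (a r : ℤ) :
    (∃ z w : ℤ, Odd z ∧ Even w ∧ z ^ 2 ^ m + a * w ^ e ≡ r [ZMOD 2 ^ k]) ↔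
      r ≡ 1 [ZMOD 2 ^ (m + 2)] := by
  constructor
  · rintro ⟨z, w, hz, hw, h⟩
    have even_term : a * w ^ e ≡ 0 [ZMOD 2 ^ (m + 2)] :=
      (((pow_dvd_pow 2 he).trans (pow_dvd_pow_of_dvd hw.two_dvd e)).mul_left a).modEq_zero_int
    calc r ≡ z ^ 2 ^ m + a * w ^ e [ZMOD 2 ^ (m + 2)] := (h.of_dvd (pow_dvd_pow 2 hk)).symm
      _ ≡ 1 + 0 [ZMOD 2 ^ (m + 2)] := (odd_pow_two_pow_modEq_one hz hm).add even_term
  · intro hr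
    obtain ⟨z, hz, hzr⟩ := exists_odd_pow_two_pow_modEq hr k
    have e_ne_zero : e ≠ 0 := by omega
    exact ⟨z, 0, hz, Even.zero, by simpa [e_ne_zero] using hzr⟩

/-- For `k ≥ 4`, a residue `r` is represented modulo `2^k` by `z^4 + 4w^4` with `z` odd and `w`
even iff `r ≡ 1 (mod 16)`; likewise for `x^4 + 2y^4` with `x` odd and `y` even. -/
theorem stmt_9 (k : ℕ) (hk : 4 ≤ k) (r : ℤ) :
    ((∃ z w : ℤ, Odd z ∧ Even w ∧ z ^ 4 + 4 * w ^ 4 ≡ r [ZMOD (2 ^ k : ℤ)]) ↔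
        r ≡ 1 [ZMOD 16]) ∧
      ((∃ x y : ℤ, Odd x ∧ Even y ∧ x ^ 4 + 2 * y ^ 4 ≡ r [ZMOD (2 ^ k : ℤ)]) ↔
        r ≡ 1 [ZMOD 16]) :=
  ⟨stmt_9_general one_le_two le_rfl hk 4 r, stmt_9_general one_le_two le_rfl hk 2 r⟩
end

section
/- Let q_1(a, b) = a^2 + b^2, q_2(a, b) = a^2 − 2b^2 and q_3(a, b) = a^2 + 2b^2. For each i ∈ {1, 2, 3} the following holds: if p is a prime number that is not represented by q_i (i.e., there are no integers a, b with q_i(a, b) = p), and a_0, b_0 are integers such that p divides q_i(a_0, b_0), then p divides a_0 and p divides b_0. -/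
/-! If a prime `p` divides `a² - d b²` but not `b`, then `a / b` is a square root of `d` modulo `p`,
and Thue's lemma provides `x`, `y`, not both zero and less than `√p` in absolute value, with
`x / y ≡ a / b`. Hence `x² - d y²` is a multiple `k p` with `|k| ≤ |d|`, and `k ≠ 0` as long as `d`
is not a square. For `d = -1, 2, -2` the only multiples left are `p`, `-p` and `2p`, and the last
two are turned into `p` by the fundamental unit of `ℤ[√2]` and by dividing by `√-2`. -/

/-- **Thue's lemma**, for the congruence class of the fraction `b / a`. -/
theorem exists_abs_le_sqrt_dvd_mul_sub_mul {n : ℕ} (hn : n ≠ 0) (a b : ℤ) :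
    ∃ x y : ℤ, (x ≠ 0 ∨ y ≠ 0) ∧ |x| ≤ n.sqrt ∧ |y| ≤ n.sqrt ∧ (n : ℤ) ∣ a * x - b * y := by
  have : NeZero n := ⟨hn⟩
  let residue : Fin (n.sqrt + 1) × Fin (n.sqrt + 1) → ZMod n := fun s => a * s.1.val - b * s.2.val
  obtain ⟨s, t, hst, hres⟩ : ∃ s t, s ≠ t ∧ residue s = residue t := by
    apply Fintype.exists_ne_map_eq_of_card_lt
    simpa only [ZMod.card, Fintype.card_prod, Fintype.card_fin] using Nat.lt_succ_sqrt n
  refine ⟨s.1.val - t.1.val, s.2.val - t.2.val, ?_, ?_, ?_, ?_⟩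
  · contrapose! hst
    ext <;> omega
  · rw [abs_le]
    omega
  · rw [abs_le]
    omega
  · rw [← ZMod.intCast_zmod_eq_zero_iff_dvd]
    push_cast
    linear_combination hres

theorem sq_lt_of_abs_le_sqrt {n : ℕ} (hn : ¬ IsSquare n) {x : ℤ} (hx : |x| ≤ n.sqrt) :
    x ^ 2 < n := by
  have hlt : n.sqrt ^ 2 < n :=
    (Nat.sqrt_le' n).lt_of_ne fun h => hn ⟨n.sqrt, by rw [← sq, h]⟩
  calc x ^ 2 ≤ (n.sqrt : ℤ) ^ 2 := sq_le_sq.mpr (hx.trans (le_abs_self _))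
    _ < n := mod_cast hlt

theorem dvd_sq_sub_mul_sq_of_isCoprime {R : Type*} [CommRing R] {n d a b x y : R}
    (hb : IsCoprime n b) (hab : n ∣ a ^ 2 - d * b ^ 2) (hxy : n ∣ b * x - a * y) :
    n ∣ x ^ 2 - d * y ^ 2 := by
  have hmul : n ∣ b ^ 2 * (x ^ 2 - d * y ^ 2) := by
    have key : b ^ 2 * (x ^ 2 - d * y ^ 2) =
        (b * x - a * y) * (b * x + a * y) + (a ^ 2 - d * b ^ 2) * y ^ 2 := by ring
    exact key ▸ dvd_add (hxy.mul_right _) (hab.mul_right _)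
  exact hb.pow_right.dvd_of_dvd_mul_left hmul

theorem dvd_and_dvd_of_dvd_sq_sub_mul_sq {R : Type*} [CommRing R] [IsDomain R] [IsBezout R]
    {p d a b : R} (hp : Prime p) (hab : p ∣ a ^ 2 - d * b ^ 2) (hb : ¬ IsCoprime p b) :
    p ∣ a ∧ p ∣ b := by
  have hpb : p ∣ b := hp.irreducible.dvd_iff_not_isCoprime.mpr hb
  have hpa : p ∣ a ^ 2 :=
    (dvd_iff_dvd_of_dvd_sub hab).mpr ((hpb.pow two_ne_zero).mul_left d)
  exact ⟨hp.dvd_of_dvd_pow hpa, hpb⟩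

theorem eq_zero_and_eq_zero_of_sq_eq_mul_sq {d : ℤ} (hd : ¬ IsSquare d) {x y : ℤ}
    (h : x ^ 2 = d * y ^ 2) : x = 0 ∧ y = 0 := by
  have hnorm : (⟨x, y⟩ : ℤ√d).norm = 0 := by
    rw [Zsqrtd.norm_def]
    linear_combination h
  rw [Zsqrtd.norm_eq_zero fun m hm => hd ⟨m, hm⟩] at hnorm
  exact Zsqrtd.ext_iff.mp hnorm

theorem exists_sq_lt_dvd_sq_sub_mul_sq {n : ℕ} (hn : ¬ IsSquare n) {d a b : ℤ}
    (hb : IsCoprime (n : ℤ) b) (hab : (n : ℤ) ∣ a ^ 2 - d * b ^ 2) :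
    ∃ x y : ℤ, (x ≠ 0 ∨ y ≠ 0) ∧ x ^ 2 < n ∧ y ^ 2 < n ∧ (n : ℤ) ∣ x ^ 2 - d * y ^ 2 := by
  have hn0 : n ≠ 0 := fun h => hn (h ▸ .zero)
  obtain ⟨x, y, hne, hx, hy, hxy⟩ := exists_abs_le_sqrt_dvd_mul_sub_mul hn0 b a
  exact ⟨x, y, hne, sq_lt_of_abs_le_sqrt hn hx, sq_lt_of_abs_le_sqrt hn hy,
    dvd_sq_sub_mul_sq_of_isCoprime hb hab hxy⟩

theorem exists_sq_add_mul_sq_eq_mul {n : ℕ} {d a b : ℤ} (hd : 0 < d)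
    (hb : IsCoprime (n : ℤ) b) (hab : (n : ℤ) ∣ a ^ 2 + d * b ^ 2) :
    ∃ k x y : ℤ, 0 < k ∧ k ≤ d ∧ x ^ 2 + d * y ^ 2 = n * k := by
  by_cases hn : IsSquare n
  · obtain ⟨m, rfl⟩ := hn
    exact ⟨1, m, 0, one_pos, hd, by push_cast; ring⟩
  obtain ⟨x, y, hne, hx, hy, k, hk⟩ :=
    exists_sq_lt_dvd_sq_sub_mul_sq (d := -d) hn hb (by simpa only [neg_mul, sub_neg_eq_add])
  rw [neg_mul, sub_neg_eq_add] at hk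
  have hpos : 0 < x ^ 2 + d * y ^ 2 := by
    rcases hne with hx0 | hy0 <;> positivity
  have hlt : n * k < n * (d + 1) := by
    calc n * k = x ^ 2 + d * y ^ 2 := hk.symm
      _ < n + d * n := by gcongr
      _ = n * (d + 1) := by ring
  refine ⟨k, x, y, ?_, ?_, hk⟩
  · exact pos_of_mul_pos_right (hk ▸ hpos) n.cast_nonneg
  · exact Int.lt_add_one_iff.mp (lt_of_mul_lt_mul_left hlt n.cast_nonneg)

theorem exists_sq_sub_mul_sq_eq_neg_mul {n : ℕ} (hn : ¬ IsSquare n) {d a b : ℤ} (hd : 0 < d)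
    (hd_sq : ¬ IsSquare d) (hb : IsCoprime (n : ℤ) b) (hab : (n : ℤ) ∣ a ^ 2 - d * b ^ 2) :
    ∃ k x y : ℤ, 0 < k ∧ k < d ∧ x ^ 2 - d * y ^ 2 = -(n * k) := by
  obtain ⟨x, y, hne, hx, hy, k, hk⟩ := exists_sq_lt_dvd_sq_sub_mul_sq hn hb hab
  have hk_ne : k ≠ 0 := by
    rintro rfl
    obtain ⟨rfl, rfl⟩ := eq_zero_and_eq_zero_of_sq_eq_mul_sq hd_sq (x := x) (y := y) (by linarith)
    exact hne.elim (· rfl) (· rfl)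
  have hk_lt_one : n * k < n * 1 := by
    calc n * k = x ^ 2 - d * y ^ 2 := hk.symm
      _ ≤ x ^ 2 := sub_le_self _ (by positivity)
      _ < n * 1 := by rwa [mul_one]
  have hneg_k_lt : n * -k < n * d := by
    calc n * -k = d * y ^ 2 - x ^ 2 := by linear_combination hk
      _ ≤ d * y ^ 2 := sub_le_self _ (sq_nonneg x)
      _ < d * n := by gcongr
      _ = n * d := mul_comm _ _
  have hk_lt : k < 1 := lt_of_mul_lt_mul_left hk_lt_one n.cast_nonneg
  have hneg_lt : -k < d := lt_of_mul_lt_mul_left hneg_k_lt n.cast_nonneg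
  exact ⟨-k, x, y, by omega, hneg_lt, by rw [hk, mul_neg, neg_neg]⟩

theorem exists_sq_add_sq_eq {n : ℕ} {a b : ℤ} (hb : IsCoprime (n : ℤ) b)
    (hab : (n : ℤ) ∣ a ^ 2 + b ^ 2) :
    ∃ x y : ℤ, x ^ 2 + y ^ 2 = n := by
  obtain ⟨k, x, y, hk_pos, hk_le, hxy⟩ :=
    exists_sq_add_mul_sq_eq_mul one_pos hb (by rwa [one_mul])
  obtain rfl : k = 1 := by omega
  exact ⟨x, y, by linarith⟩

theorem exists_sq_sub_two_mul_sq_eq {n : ℕ} {a b : ℤ} (hb : IsCoprime (n : ℤ) b)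
    (hab : (n : ℤ) ∣ a ^ 2 - 2 * b ^ 2) :
    ∃ x y : ℤ, x ^ 2 - 2 * y ^ 2 = n := by
  by_cases hn : IsSquare n
  · obtain ⟨m, rfl⟩ := hn
    exact ⟨m, 0, by push_cast; ring⟩
  obtain ⟨k, x, y, hk_pos, hk_lt, hxy⟩ :=
    exists_sq_sub_mul_sq_eq_neg_mul hn two_pos Int.prime_two.irreducible.not_isSquare hb hab
  obtain rfl : k = 1 := by omega
  -- `(x + y√2)(1 + √2)`, where `1 + √2` has norm `-1`
  exact ⟨x + 2 * y, x + y, by linear_combination -hxy⟩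

theorem exists_sq_add_two_mul_sq_eq {n : ℕ} {a b : ℤ} (hb : IsCoprime (n : ℤ) b)
    (hab : (n : ℤ) ∣ a ^ 2 + 2 * b ^ 2) :
    ∃ x y : ℤ, x ^ 2 + 2 * y ^ 2 = n := by
  obtain ⟨k, x, y, hk_pos, hk_le, hxy⟩ := exists_sq_add_mul_sq_eq_mul two_pos hb hab
  obtain rfl | rfl : k = 1 ∨ k = 2 := by omega
  · exact ⟨x, y, by linarith⟩
  · have hx : (2 : ℤ) ∣ x ^ 2 := ⟨n - y ^ 2, by linarith⟩
    obtain ⟨z, rfl⟩ := Int.prime_two.dvd_of_dvd_pow hx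
    exact ⟨y, z, by linarith⟩

/-- For each of the binary quadratic forms `q₁(a,b) = a² + b²`, `q₂(a,b) = a² - 2b²`,
`q₃(a,b) = a² + 2b²`: if a prime `p` is not represented by the form and `p` divides
the value of the form at `(a₀, b₀)`, then `p ∣ a₀` and `p ∣ b₀`. -/
theorem stmt_10 (p : ℕ) (hp : p.Prime) :
    ((¬ ∃ a b : ℤ, a ^ 2 + b ^ 2 = p) →
        ∀ a₀ b₀ : ℤ, (p : ℤ) ∣ a₀ ^ 2 + b₀ ^ 2 → (p : ℤ) ∣ a₀ ∧ (p : ℤ) ∣ b₀) ∧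
      ((¬ ∃ a b : ℤ, a ^ 2 - 2 * b ^ 2 = p) →
        ∀ a₀ b₀ : ℤ, (p : ℤ) ∣ a₀ ^ 2 - 2 * b₀ ^ 2 → (p : ℤ) ∣ a₀ ∧ (p : ℤ) ∣ b₀) ∧
      ((¬ ∃ a b : ℤ, a ^ 2 + 2 * b ^ 2 = p) →
        ∀ a₀ b₀ : ℤ, (p : ℤ) ∣ a₀ ^ 2 + 2 * b₀ ^ 2 → (p : ℤ) ∣ a₀ ∧ (p : ℤ) ∣ b₀) := by
  have hpZ : Prime (p : ℤ) := Nat.prime_iff_prime_int.mp hp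
  refine ⟨fun hrep a₀ b₀ h => ?_, fun hrep a₀ b₀ h => ?_, fun hrep a₀ b₀ h => ?_⟩
  · refine dvd_and_dvd_of_dvd_sq_sub_mul_sq (d := -1) hpZ (by simpa using h) fun hb => ?_
    exact hrep (exists_sq_add_sq_eq hb h)
  · refine dvd_and_dvd_of_dvd_sq_sub_mul_sq hpZ h fun hb => ?_
    exact hrep (exists_sq_sub_two_mul_sq_eq hb h)
  · refine dvd_and_dvd_of_dvd_sq_sub_mul_sq (d := -2) hpZ (by simpa using h) fun hb => ?_
    exact hrep (exists_sq_add_two_mul_sq_eq hb h)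
end

section
/- Let p be a prime number different from 2, 5, 13 and 17. Then each of the quartic forms f_N(x, z) = x^4 − z^4, g_N(y, w) = 4w^4 − 2y^4, f_S(z, w) = z^4 + 4w^4 and g_S(x, y) = x^4 + 2y^4 represents every residue class modulo p: for every integer r there exist integers giving the form a value congruent to r modulo p. -/
/-!
Let `χ` be a character of order `n` of a finite field with `q` elements. The sum of the `χ ^ j` over
`j < n` vanishes at every element that is not an `n`-th power. If `a x ^ n + b y ^ n = c` has no
solution, then for every `u` one of `(c / a) u` and `(c / b) (1 - u)` is not an `n`-th power, so
multiplying the two character sums and summing over `u` gives a vanishing combination of Jacobi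
sums. As neither `c / a` nor `c / b` is an `n`-th power (take `u = 1` and `u = 0`), the terms with a
trivial character add up to `q`; the others have absolute value `√q`, or at most `1` when the two
characters are inverse to each other. Hence `q ≤ (n - 1) (1 + (n - 2) √q)`.

Fourth powers are the same as `n`-th powers for `n = gcd (4, q - 1)`. The inequality fails for
`n ≤ 2` because `q > 1`, and for `n = 4` as soon as `q ≥ 43`, which leaves the primes `29`, `37`
and `41` to a finite verification.
-/

open Finset

section Powers

theorem exists_pow_eq_pow_gcd_card_sub_one {F : Type*} [Field F] [Fintype F] {n : ℕ} (hn : n ≠ 0)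
    (x : F) : ∃ y : F, y ^ n = x ^ n.gcd (Fintype.card F - 1) := by
  classical
  rcases eq_or_ne x 0 with rfl | hx
  · exact ⟨0, by rw [zero_pow hn, zero_pow (Nat.gcd_pos_of_pos_left _ hn.bot_lt).ne']⟩
  · lift x to Fˣ using hx.isUnit
    rw [← Fintype.card_units]
    refine ⟨(x ^ n.gcdA (Fintype.card Fˣ) : Fˣ), ?_⟩
    rw [← Units.val_pow_eq_pow_val, ← Units.val_pow_eq_pow_val, ← zpow_natCast, ← zpow_natCast,
      Nat.gcd_eq_gcd_ab, zpow_add, zpow_mul x (Fintype.card Fˣ), zpow_natCast x (Fintype.card Fˣ),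
      pow_card_eq_one, one_zpow, mul_one, zpow_mul, zpow_comm]

theorem exists_pow_orderOf_eq_of_mulChar_apply_eq_one {F R : Type*} [Field F] [Finite F]
    [CommMonoidWithZero R] [Nontrivial R] {χ : MulChar F R} {u : F} (hu : χ u = 1) :
    ∃ x : F, x ^ orderOf χ = u := by
  have hu₀ : u ≠ 0 := by
    rintro rfl
    exact zero_ne_one (χ.map_zero.symm.trans hu)
  lift u to Fˣ using hu₀.isUnit
  obtain ⟨g, hg⟩ := IsCyclic.exists_generator (α := Fˣ)
  have horder : orderOf (χ g) = orderOf χ := orderOf_eq_orderOf_iff.mpr fun m ↦ by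
    rw [MulChar.eq_iff hg (χ ^ m) 1, MulChar.pow_apply_coe, MulChar.one_apply_coe]
  obtain ⟨k, rfl⟩ := mem_powers_iff_mem_zpowers.mpr (hg u)
  obtain ⟨m, rfl⟩ : orderOf χ ∣ k := horder ▸ orderOf_dvd_of_pow_eq_one (by simpa using hu)
  exact ⟨(g : F) ^ m, by rw [← pow_mul, mul_comm]; simp⟩

end Powers

section Norms

theorem norm_mulChar_apply_le_one {M K : Type*} [CommMonoid M] [Finite Mˣ] [NormedField K]
    (χ : MulChar M K) (a : M) : ‖χ a‖ ≤ 1 := by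
  by_cases ha : IsUnit a
  · lift a to Mˣ using ha
    have hfin : IsOfFinOrder (χ a) :=
      (χ.toMonoidHom.comp (Units.coeHom M)).isOfFinOrder (isOfFinOrder_of_finite a)
    exact hfin.norm_eq_one.le
  · rw [χ.map_nonunit ha, norm_zero]
    exact zero_le_one

theorem star_jacobiSum {R : Type*} [CommRing R] [Fintype R] (χ φ : MulChar R ℂ) :
    star (jacobiSum χ φ) = jacobiSum χ⁻¹ φ⁻¹ := by
  simp only [jacobiSum, star_sum, star_mul', MulChar.star_apply']

variable {F : Type*} [Field F] [Fintype F]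

theorem norm_jacobiSum_eq_sqrt_card {χ φ : MulChar F ℂ} (hχ : χ ≠ 1) (hφ : φ ≠ 1)
    (hχφ : χ * φ ≠ 1) : ‖jacobiSum χ φ‖ = √(Fintype.card F) := by
  have hchar : ringChar ℂ ≠ ringChar F := by
    rw [ringChar.eq_zero]
    exact (CharP.ringChar_ne_zero_of_finite F).symm
  have hmul : ‖jacobiSum χ φ‖ * ‖jacobiSum χ φ‖ = Fintype.card F := by
    have := congrArg norm (jacobiSum_mul_jacobiSum_inv hchar hχ hφ hχφ)
    rwa [← star_jacobiSum, norm_mul, norm_star, Complex.norm_natCast] at this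
  rw [← hmul, Real.sqrt_mul_self (norm_nonneg _)]

theorem norm_jacobiSum_inv_le_one {χ : MulChar F ℂ} (hχ : χ ≠ 1) : ‖jacobiSum χ χ⁻¹‖ ≤ 1 := by
  rw [jacobiSum_nontrivial_inv hχ, norm_neg]
  exact norm_mulChar_apply_le_one χ (-1)

theorem pow_ne_one_of_mem_Ico {G : Type*} [Monoid G] {x : G} {j : ℕ}
    (hj : j ∈ Ico 1 (orderOf x)) : x ^ j ≠ 1 :=
  pow_ne_one_of_lt_orderOf (Nat.one_le_iff_ne_zero.mp (mem_Ico.mp hj).1) (mem_Ico.mp hj).2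

theorem sum_norm_jacobiSum_pow_le (χ : MulChar F ℂ) {j : ℕ} (hj : j ∈ Ico 1 (orderOf χ)) :
    ∑ k ∈ Ico 1 (orderOf χ), ‖jacobiSum (χ ^ j) (χ ^ k)‖ ≤
      1 + (orderOf χ - 2) * √(Fintype.card F) := by
  obtain ⟨hj₁, hjn⟩ := mem_Ico.mp hj
  have hmem : orderOf χ - j ∈ Ico 1 (orderOf χ) := by grind
  have hinv : χ ^ (orderOf χ - j) = (χ ^ j)⁻¹ := by
    rw [eq_inv_iff_mul_eq_one, ← pow_add, Nat.sub_add_cancel hjn.le, pow_orderOf_eq_one]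
  rw [← add_sum_erase _ _ hmem, hinv]
  refine add_le_add (norm_jacobiSum_inv_le_one (pow_ne_one_of_mem_Ico hj)) (le_of_eq ?_)
  have hgeneric : ∀ k ∈ (Ico 1 (orderOf χ)).erase (orderOf χ - j),
      ‖jacobiSum (χ ^ j) (χ ^ k)‖ = √(Fintype.card F) := by
    intro k hk
    obtain ⟨hkj, hk⟩ := mem_erase.mp hk
    refine norm_jacobiSum_eq_sqrt_card (pow_ne_one_of_mem_Ico hj) (pow_ne_one_of_mem_Ico hk) ?_
    intro hone
    refine hkj (pow_injOn_Iio_orderOf (mem_Ico.mp hk).2 (mem_Ico.mp hmem).2 ?_)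
    exact (eq_inv_of_mul_eq_one_right hone).trans hinv.symm
  rw [sum_congr rfl hgeneric, sum_const, nsmul_eq_mul, card_erase_of_mem hmem, Nat.card_Ico,
    Nat.sub_sub, Nat.cast_sub (by lia), Nat.cast_two]

end Norms

section DiagonalEquation

variable {F R : Type*} [Field F] [CommRing R]

/-- The sum of all powers of the character `χ`, which is `orderOf χ` times the indicator function
of the nonzero `orderOf χ`-th powers. -/
noncomputable def sumPowers (χ : MulChar F R) (u : F) : R :=
  ∑ j ∈ range (orderOf χ), (χ ^ j) u

theorem sumPowers_eq_one_add [Finite F] {χ : MulChar F R} {u : F} (hu : u ≠ 0) :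
    sumPowers χ u = 1 + ∑ j ∈ Ico 1 (orderOf χ), (χ ^ j) u := by
  rw [sumPowers, range_eq_Ico, sum_eq_sum_Ico_succ_bot χ.orderOf_pos, pow_zero,
    MulChar.one_apply hu.isUnit]

theorem sumPowers_eq_zero [Finite F] [IsDomain R] {χ : MulChar F R} {u : F}
    (hu : ¬∃ x : F, x ^ orderOf χ = u) : sumPowers χ u = 0 := by
  rcases eq_or_ne u 0 with rfl | hu₀
  · exact sum_eq_zero fun j _ ↦ MulChar.map_zero (χ ^ j)
  lift u to Fˣ using hu₀.isUnit
  have hroot : χ u ^ orderOf χ = 1 := by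
    rw [← MulChar.pow_apply_coe, pow_orderOf_eq_one, MulChar.one_apply_coe]
  have hne : χ u - 1 ≠ 0 :=
    sub_ne_zero.mpr (mt exists_pow_orderOf_eq_of_mulChar_apply_eq_one hu)
  have hgeom := geom_sum_mul (χ u) (orderOf χ)
  rw [hroot, sub_self] at hgeom
  simpa only [sumPowers, MulChar.pow_apply_coe] using (mul_eq_zero.mp hgeom).resolve_right hne

variable [Fintype F]

theorem sum_sumPowers_mul_sumPowers (χ : MulChar F R) (α β : F) :
    ∑ u, sumPowers χ (α * u) * sumPowers χ (β * (1 - u)) =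
      ∑ j ∈ range (orderOf χ), ∑ k ∈ range (orderOf χ),
        (χ ^ j) α * (χ ^ k) β * jacobiSum (χ ^ j) (χ ^ k) := by
  simp only [sumPowers, sum_mul_sum]
  rw [sum_comm]
  refine sum_congr rfl fun j _ ↦ ?_
  rw [sum_comm]
  refine sum_congr rfl fun k _ ↦ ?_
  simp only [jacobiSum, mul_sum, map_mul, mul_mul_mul_comm]

variable [IsDomain R]

theorem sum_sumPowers_mul_sumPowers_eq_card_add {χ : MulChar F R} {α β : F} (hα₀ : α ≠ 0)
    (hβ₀ : β ≠ 0) (hα : sumPowers χ α = 0) (hβ : sumPowers χ β = 0) :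
    ∑ u, sumPowers χ (α * u) * sumPowers χ (β * (1 - u)) =
      Fintype.card F + ∑ j ∈ Ico 1 (orderOf χ), ∑ k ∈ Ico 1 (orderOf χ),
        (χ ^ j) α * (χ ^ k) β * jacobiSum (χ ^ j) (χ ^ k) := by
  have hleft : ∑ j ∈ Ico 1 (orderOf χ), (χ ^ j) α * jacobiSum (χ ^ j) 1 = 1 := by
    rw [sum_congr rfl fun j hj ↦ by
      rw [jacobiSum_comm, jacobiSum_one_nontrivial (pow_ne_one_of_mem_Ico hj)], ← sum_mul]
    linear_combination sumPowers_eq_one_add (χ := χ) hα₀ - hα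
  have hright : ∑ k ∈ Ico 1 (orderOf χ), (χ ^ k) β * jacobiSum 1 (χ ^ k) = 1 := by
    rw [sum_congr rfl fun k hk ↦ by
      rw [jacobiSum_one_nontrivial (pow_ne_one_of_mem_Ico hk)], ← sum_mul]
    linear_combination sumPowers_eq_one_add (χ := χ) hβ₀ - hβ
  rw [sum_sumPowers_mul_sumPowers]
  simp only [range_eq_Ico, sum_eq_sum_Ico_succ_bot χ.orderOf_pos, pow_zero, zero_add,
    MulChar.one_apply hα₀.isUnit, MulChar.one_apply hβ₀.isUnit, one_mul, mul_one,
    jacobiSum_one_one, sum_add_distrib, hleft, hright]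
  ring

theorem norm_sum_mul_jacobiSum_pow_le (χ : MulChar F ℂ) (α β : F) :
    ‖∑ j ∈ Ico 1 (orderOf χ), ∑ k ∈ Ico 1 (orderOf χ),
        (χ ^ j) α * (χ ^ k) β * jacobiSum (χ ^ j) (χ ^ k)‖ ≤
      (orderOf χ - 1) * (1 + (orderOf χ - 2) * √(Fintype.card F)) := by
  have hterm (j k : ℕ) : ‖(χ ^ j) α * (χ ^ k) β * jacobiSum (χ ^ j) (χ ^ k)‖ ≤
      ‖jacobiSum (χ ^ j) (χ ^ k)‖ := by
    rw [norm_mul, norm_mul]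
    exact mul_le_of_le_one_left (norm_nonneg _) (mul_le_one₀
      (norm_mulChar_apply_le_one _ _) (norm_nonneg _) (norm_mulChar_apply_le_one _ _))
  calc
    _ ≤ ∑ j ∈ Ico 1 (orderOf χ), ∑ k ∈ Ico 1 (orderOf χ), ‖jacobiSum (χ ^ j) (χ ^ k)‖ :=
      norm_sum_le_of_le _ fun j _ ↦ norm_sum_le_of_le _ fun k _ ↦ hterm j k
    _ ≤ ∑ _j ∈ Ico 1 (orderOf χ), (1 + (orderOf χ - 2) * √(Fintype.card F)) :=
      sum_le_sum fun _ hj ↦ sum_norm_jacobiSum_pow_le χ hj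
    _ = _ := by
      rw [sum_const, nsmul_eq_mul, Nat.card_Ico, Nat.cast_pred χ.orderOf_pos]

theorem exists_pow_orderOf_eq_mul_and_eq_mul_one_sub {χ : MulChar F ℂ}
    (hq : (orderOf χ - 1) * (1 + (orderOf χ - 2) * √(Fintype.card F)) < Fintype.card F)
    {α β : F} (hα : α ≠ 0) (hβ : β ≠ 0) :
    ∃ u x y : F, x ^ orderOf χ = α * u ∧ y ^ orderOf χ = β * (1 - u) := by
  by_contra! hno
  have hproduct (u : F) : sumPowers χ (α * u) * sumPowers χ (β * (1 - u)) = 0 := by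
    by_cases hu : ∃ x : F, x ^ orderOf χ = α * u
    · obtain ⟨x, hx⟩ := hu
      rw [sumPowers_eq_zero fun ⟨y, hy⟩ ↦ hno u x y hx hy, mul_zero]
    · rw [sumPowers_eq_zero hu, zero_mul]
  have hα' : sumPowers χ α = 0 := sumPowers_eq_zero fun ⟨x, hx⟩ ↦
    hno 1 x 0 (by rw [hx, mul_one]) (by rw [zero_pow χ.orderOf_pos.ne', sub_self, mul_zero])
  have hβ' : sumPowers χ β = 0 := sumPowers_eq_zero fun ⟨y, hy⟩ ↦
    hno 0 0 y (by rw [zero_pow χ.orderOf_pos.ne', mul_zero]) (by rw [hy, sub_zero, mul_one])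
  have hcard := sum_sumPowers_mul_sumPowers_eq_card_add hα hβ hα' hβ'
  rw [sum_eq_zero fun u _ ↦ hproduct u] at hcard
  have hbound := norm_sum_mul_jacobiSum_pow_le χ α β
  rw [← neg_eq_of_add_eq_zero_right hcard.symm, norm_neg, Complex.norm_natCast] at hbound
  exact hq.not_ge hbound

theorem exists_mul_pow_add_mul_pow_eq_of_dvd {n : ℕ} (hn : n ∣ Fintype.card F - 1)
    (hq : ((n : ℝ) - 1) * (1 + (n - 2) * √(Fintype.card F)) < Fintype.card F)
    {a b : F} (ha : a ≠ 0) (hb : b ≠ 0) (c : F) : ∃ x y : F, a * x ^ n + b * y ^ n = c := by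
  have hn₀ : n ≠ 0 := by
    rintro rfl
    exact (Nat.sub_pos_of_lt Fintype.one_lt_card).ne' (zero_dvd_iff.mp hn)
  rcases eq_or_ne c 0 with rfl | hc
  · exact ⟨0, 0, by simp [hn₀]⟩
  obtain ⟨χ, rfl⟩ := MulChar.exists_mulChar_orderOf F hn (Complex.isPrimitiveRoot_exp n hn₀)
  obtain ⟨u, x, y, hx, hy⟩ :=
    exists_pow_orderOf_eq_mul_and_eq_mul_one_sub hq (div_ne_zero hc ha) (div_ne_zero hc hb)
  refine ⟨x, y, ?_⟩
  rw [hx, hy]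
  field_simp
  ring

theorem exists_mul_pow_add_mul_pow_eq {n d : ℕ} (hn : n ≠ 0)
    (hd : n.gcd (Fintype.card F - 1) = d)
    (hq : ((d : ℝ) - 1) * (1 + (d - 2) * √(Fintype.card F)) < Fintype.card F)
    {a b : F} (ha : a ≠ 0) (hb : b ≠ 0) (c : F) : ∃ x y : F, a * x ^ n + b * y ^ n = c := by
  subst hd
  obtain ⟨x, y, hxy⟩ :=
    exists_mul_pow_add_mul_pow_eq_of_dvd (Nat.gcd_dvd_right _ _) hq ha hb c
  obtain ⟨x', hx⟩ := exists_pow_eq_pow_gcd_card_sub_one hn x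
  obtain ⟨y', hy⟩ := exists_pow_eq_pow_gcd_card_sub_one hn y
  exact ⟨x', y', by rw [hx, hy, hxy]⟩

end DiagonalEquation

section Quartic

theorem exists_mul_pow_four_add_mul_pow_four_eq {F : Type*} [Field F] [Fintype F]
    (hq : Fintype.card F % 4 = 1 → 43 ≤ Fintype.card F) {a b : F} (ha : a ≠ 0) (hb : b ≠ 0)
    (c : F) : ∃ x y : F, a * x ^ 4 + b * y ^ 4 = c := by
  have hcard : 1 < Fintype.card F := Fintype.one_lt_card
  have hgcd : Nat.gcd 4 (Fintype.card F - 1) ∈ ({1, 2, 4} : Finset ℕ) :=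
    Nat.mem_divisors.mpr ⟨Nat.gcd_dvd_left _ _, four_ne_zero⟩
  simp only [mem_insert, mem_singleton] at hgcd
  rcases hgcd with hd | hd | hd <;>
    refine exists_mul_pow_add_mul_pow_eq four_ne_zero hd ?_ ha hb c
  · simpa using Fintype.card_pos (α := F)
  · norm_num [hcard]
  · have hdvd : 4 ∣ Fintype.card F - 1 := hd ▸ Nat.gcd_dvd_right _ _
    have hlarge : (43 : ℝ) ≤ Fintype.card F := by exact_mod_cast hq (by lia)
    have hsqrt : 6.5 ≤ √(Fintype.card F) := Real.le_sqrt_of_sq_le (by norm_num; linarith)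
    push_cast
    nlinarith [Real.sq_sqrt (Nat.cast_nonneg (α := ℝ) (Fintype.card F))]

/-- Over `R`, each of the four forms `x ^ 4 - z ^ 4`, `4 * w ^ 4 - 2 * y ^ 4`, `z ^ 4 + 4 * w ^ 4`
and `x ^ 4 + 2 * y ^ 4` takes every value. -/
def QuarticFormsUniversal (R : Type*) [CommRing R] : Prop :=
  ∀ r : R, (∃ x z : R, x ^ 4 - z ^ 4 = r) ∧ (∃ y w : R, 4 * w ^ 4 - 2 * y ^ 4 = r) ∧
    (∃ z w : R, z ^ 4 + 4 * w ^ 4 = r) ∧ (∃ x y : R, x ^ 4 + 2 * y ^ 4 = r)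

theorem quarticFormsUniversal_zmod_of_eq {p : ℕ} (hp : p = 29 ∨ p = 37 ∨ p = 41) :
    QuarticFormsUniversal (ZMod p) := by
  rcases hp with rfl | rfl | rfl <;> unfold QuarticFormsUniversal <;> decide +kernel

theorem quarticFormsUniversal_of_card {F : Type*} [Field F] [Fintype F] (h2 : (2 : F) ≠ 0)
    (hq : Fintype.card F % 4 = 1 → 43 ≤ Fintype.card F) : QuarticFormsUniversal F := by
  intro r
  have h4 : (4 : F) ≠ 0 := by
    rw [show (4 : F) = 2 * 2 by norm_num]
    exact mul_ne_zero h2 h2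
  have hrep {a b : F} (ha : a ≠ 0) (hb : b ≠ 0) : ∃ x y : F, a * x ^ 4 + b * y ^ 4 = r :=
    exists_mul_pow_four_add_mul_pow_four_eq hq ha hb r
  refine ⟨?_, exists_comm.mp ?_, ?_, ?_⟩
  · simpa [sub_eq_add_neg] using hrep one_ne_zero (neg_ne_zero.mpr one_ne_zero)
  · simpa [sub_eq_add_neg] using hrep h4 (neg_ne_zero.mpr h2)
  · simpa using hrep one_ne_zero h4
  · simpa using hrep one_ne_zero h2

end Quartic

/-- If `p` is a prime different from `2, 5, 13, 17`, then each of the quartic forms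
`x⁴ - z⁴`, `4w⁴ - 2y⁴`, `z⁴ + 4w⁴`, `x⁴ + 2y⁴` represents every residue class modulo `p`. -/
theorem stmt_17 (p : ℕ) (hp : p.Prime) (h2 : p ≠ 2) (h5 : p ≠ 5) (h13 : p ≠ 13)
    (h17 : p ≠ 17) (r : ℤ) :
    (∃ x z : ℤ, x ^ 4 - z ^ 4 ≡ r [ZMOD (p : ℤ)]) ∧
      (∃ y w : ℤ, 4 * w ^ 4 - 2 * y ^ 4 ≡ r [ZMOD (p : ℤ)]) ∧
      (∃ z w : ℤ, z ^ 4 + 4 * w ^ 4 ≡ r [ZMOD (p : ℤ)]) ∧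
      (∃ x y : ℤ, x ^ 4 + 2 * y ^ 4 ≡ r [ZMOD (p : ℤ)]) := by
  have : Fact p.Prime := ⟨hp⟩
  suffices h : QuarticFormsUniversal (ZMod p) by
    simpa [ZMod.exists, ← ZMod.intCast_eq_intCast_iff] using h r
  by_cases hq : p % 4 = 1 → 43 ≤ p
  · have htwo : (2 : ZMod p) ≠ 0 := Ring.two_ne_zero (by rwa [ZMod.ringChar_zmod_n])
    exact quarticFormsUniversal_of_card htwo (by rwa [ZMod.card])
  · push Not at hq
    obtain ⟨hmod, hlt⟩ := hq
    refine quarticFormsUniversal_zmod_of_eq ?_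
    interval_cases p <;> first | lia | norm_num at hp
end
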